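/- Let f be C²-smooth on an open neighbourhood of S^{n-1} whose restriction to S^{n-1} is orthogonal to all affine functions. Then for every a ∈ ℝ, ∫ f² dσ_{n-1} ≤ (5/(n−1)²) ∫ ‖f'' − a I_n‖²_HS dσ_{n-1}, where f'' is the Euclidean Hessian and I_n the identity matrix. -/

import Mathlib

open MeasureTheory Metric Filter
open scoped RealInnerProductSpace ENNReal NNReal

noncomputable section

namespace SecondOrderConc

/-- Euclidean space ℝⁿ. -/
abbrev E (n : ℕ) : Type := EuclideanSpace ℝ (Fin n)

/-- The uniform (normalized rotation-invariant) probability measure `σ_{n-1}`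
on the unit sphere `S^{n-1}`, viewed as a measure on the ambient space ℝⁿ. -/
def sphMeasure (n : ℕ) : Measure (E n) :=
  ((((volume : Measure (E n)).toSphere).map Subtype.val) Set.univ)⁻¹ •
    (((volume : Measure (E n)).toSphere).map Subtype.val)

variable {n : ℕ}

/-- Euclidean Hessian of `f` at `x`, as a continuous linear operator on ℝⁿ. -/
def hess (f : E n → ℝ) (x : E n) : E n →L[ℝ] E n :=
  fderiv ℝ (gradient f) x

/-- Squared Hilbert–Schmidt norm of an operator on ℝⁿ. -/
def hsNormSq (A : E n →L[ℝ] E n) : ℝ :=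
  ∑ i : Fin n, ‖A (EuclideanSpace.single i 1)‖ ^ 2

/-- Orthogonal projection of ℝⁿ onto `θ^⊥` (for a unit vector `θ`). -/
def projPerp (θ : E n) : E n →L[ℝ] E n :=
  ContinuousLinearMap.id ℝ (E n) - (innerSL ℝ θ).smulRight θ

/-- Spherical gradient `∇_S f(θ) = ∇f(θ) − ⟨∇f(θ),θ⟩θ`. -/
def sgrad (f : E n → ℝ) (θ : E n) : E n :=
  gradient f θ - ⟪gradient f θ, θ⟫ • θ

/-- Spherical Hessian `f''_S(θ) = P_{θ^⊥} (f''(θ) − ⟨∇f(θ),θ⟩ I_n) P_{θ^⊥}`. -/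
def sHess (f : E n → ℝ) (θ : E n) : E n →L[ℝ] E n :=
  (projPerp θ).comp
    ((hess f θ - ⟪gradient f θ, θ⟫ • ContinuousLinearMap.id ℝ (E n)).comp (projPerp θ))

/-- Spherical Laplacian `Δ_S f(θ) = Tr f''_S(θ)`. -/
def sLap (f : E n → ℝ) (θ : E n) : ℝ :=
  LinearMap.trace ℝ (E n) (sHess f θ).toLinearMap

/-- Euclidean Laplacian `Δ f = Tr f''`. -/
def eLap (f : E n → ℝ) (x : E n) : ℝ :=
  LinearMap.trace ℝ (E n) (hess f x).toLinearMap

/-- 0-homogeneous extension to `ℝⁿ \ {0}` of (the restriction to the sphere of) `g`. -/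
def ext0 (g : E n → ℝ) : E n → ℝ := fun x => g (‖x‖⁻¹ • x)


open ProbabilityTheory

lemma stdGaussian_eq_withDensity (n : ℕ) : ∃ c : ℝ, 0 ≤ c ∧
    stdGaussian (E n) = (volume : Measure (E n)).withDensity
      (fun x ↦ ENNReal.ofReal (c * Real.exp (-‖x‖ ^ 2 / 2))) := by
  have hc : 0 ≤ (((2 * Real.pi) ^ ((n : ℝ) / 2))⁻¹ : ℝ) := by positivity
  refine ⟨((2 * Real.pi) ^ ((n : ℝ) / 2))⁻¹, hc, ?_⟩
  set c : ℝ := ((2 * Real.pi) ^ ((n : ℝ) / 2))⁻¹ with hcdef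
  have hpos : 0 < (2 * Real.pi) ^ ((n : ℝ) / 2) := by positivity
  have hcC : ((Real.pi : ℂ) / (1 / 2)) ^ ((Module.finrank ℝ (E n) : ℂ) / 2) = ((c⁻¹ : ℝ) : ℂ) := by
    rw [hcdef, inv_inv, Complex.ofReal_cpow (by positivity)]
    simp [mul_comm]
  have hint : Integrable (fun x : E n ↦ c * Real.exp (-‖x‖ ^ 2 / 2)) := by
    have h := GaussianFourier.integrable_cexp_neg_mul_sq_norm_add (V := E n) (b := 1 / 2)
      (by norm_num) 0 0
    have h2 := h.re.const_mul c
    refine h2.congr (Eventually.of_forall fun x ↦ ?_)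
    have : (-(1 / 2 : ℂ) * (‖x‖ : ℂ) ^ 2 + 0 * ((⟪(0 : E n), x⟫ : ℝ) : ℂ))
        = ((-‖x‖ ^ 2 / 2 : ℝ) : ℂ) := by push_cast; ring
    simp only [this, ← Complex.ofReal_exp, RCLike.re_to_complex, Complex.ofReal_re]
  have : IsFiniteMeasure ((volume : Measure (E n)).withDensity
      (fun x ↦ ENNReal.ofReal (c * Real.exp (-‖x‖ ^ 2 / 2)))) :=
    isFiniteMeasure_withDensity_ofReal hint.2
  refine Measure.ext_of_charFun (funext fun t ↦ ?_)
  rw [charFun_stdGaussian, charFun_apply]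
  rw [integral_withDensity_eq_integral_toReal_smul (by fun_prop) (by simp)]
  have h := GaussianFourier.integral_cexp_neg_mul_sq_norm_add (V := E n) (b := 1 / 2)
      (by norm_num) Complex.I t
  have h2 : ∀ x : E n, (ENNReal.ofReal (c * Real.exp (-‖x‖ ^ 2 / 2))).toReal •
      Complex.exp ((⟪x, t⟫ : ℝ) * Complex.I) =
      c * Complex.exp (-(1 / 2 : ℂ) * (‖x‖ : ℂ) ^ 2 + Complex.I * ((⟪t, x⟫ : ℝ) : ℂ)) := by
    intro x
    rw [ENNReal.toReal_ofReal (by positivity), Complex.real_smul, Complex.exp_add,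
      real_inner_comm]
    push_cast
    rw [mul_assoc]
    congr 3 <;> ring_nf
  simp_rw [h2]
  rw [integral_const_mul, h, hcC, ← mul_assoc, ← Complex.ofReal_mul, hcdef, inv_inv,
    inv_mul_cancel₀ hpos.ne']
  simp
  ring_nf

lemma gaussian_absolutelyContinuous (n : ℕ) :
    stdGaussian (E n) ≪ (volume : Measure (E n)) := by
  obtain ⟨c, -, h⟩ := stdGaussian_eq_withDensity n
  rw [h]
  exact withDensity_absolutelyContinuous _ _

lemma integral_sphMeasure (g : E n → ℝ) :
    ∫ θ, g θ ∂sphMeasure n =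
      ((volume : Measure (E n)).toSphere.real Set.univ)⁻¹ *
        ∫ θ : sphere (0 : E n) 1, g θ ∂(volume : Measure (E n)).toSphere := by
  have he : MeasurableEmbedding (Subtype.val : sphere (0 : E n) 1 → E n) :=
    MeasurableEmbedding.subtype_coe isClosed_sphere.measurableSet
  rw [sphMeasure, integral_smul_measure, he.integral_map,
    he.map_apply, Set.preimage_univ, ENNReal.toReal_inv, smul_eq_mul, Measure.real]

lemma integrable_sphMeasure (hn : n ≠ 0) {F : Type*} [NormedAddCommGroup F]
    {g : E n → F} (hg : ContinuousOn g (sphere 0 1)) : Integrable g (sphMeasure n) := by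
  have he : MeasurableEmbedding (Subtype.val : sphere (0 : E n) 1 → E n) :=
    MeasurableEmbedding.subtype_coe isClosed_sphere.measurableSet
  have : Nonempty (Fin n) := ⟨⟨0, Nat.pos_of_ne_zero hn⟩⟩
  rw [sphMeasure]
  refine Integrable.smul_measure ?_ ?_
  · rw [he.integrable_map_iff]
    exact (continuousOn_iff_continuous_domRestrict.1 hg).integrable_of_hasCompactSupport
      (HasCompactSupport.of_compactSpace _)
  · rw [he.map_apply, Set.preimage_univ]
    simp only [ne_eq, ENNReal.inv_eq_top, Measure.measure_univ_eq_zero]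
    exact Measure.toSphere_ne_zero _

lemma isProbabilityMeasure_sphMeasure (hn : n ≠ 0) : IsProbabilityMeasure (sphMeasure n) := by
  have he : MeasurableEmbedding (Subtype.val : sphere (0 : E n) 1 → E n) :=
    MeasurableEmbedding.subtype_coe isClosed_sphere.measurableSet
  have : Nonempty (Fin n) := ⟨⟨0, Nat.pos_of_ne_zero hn⟩⟩
  constructor
  rw [sphMeasure, Measure.smul_apply, smul_eq_mul, he.map_apply, Set.preimage_univ]
  refine ENNReal.inv_mul_cancel ?_ (measure_ne_top _ _)
  simp only [ne_eq, Measure.measure_univ_eq_zero]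
  exact Measure.toSphere_ne_zero _

lemma ae_sphMeasure (n : ℕ) : ∀ᵐ θ ∂sphMeasure n, θ ∈ sphere (0 : E n) 1 := by
  have he : MeasurableEmbedding (Subtype.val : sphere (0 : E n) 1 → E n) :=
    MeasurableEmbedding.subtype_coe isClosed_sphere.measurableSet
  rw [sphMeasure]
  refine Measure.ae_smul_measure ?_ _
  rw [he.ae_map_iff]
  exact Eventually.of_forall fun x ↦ x.2

lemma integral_norm_mul_direction (hn : n ≠ 0) (h : ℝ → ℝ) (g : E n → ℝ) :
    ∫ x, h ‖x‖ * g (‖x‖⁻¹ • x) = (∫ x : E n, h ‖x‖) * ∫ θ, g θ ∂sphMeasure n := by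
  have : Nonempty (Fin n) := ⟨⟨0, Nat.pos_of_ne_zero hn⟩⟩
  have key : ∀ g : E n → ℝ, ∫ x, h ‖x‖ * g (‖x‖⁻¹ • x) =
      (∫ θ : sphere (0 : E n) 1, g θ ∂(volume : Measure (E n)).toSphere) *
      ∫ r : Set.Ioi (0 : ℝ), h r ∂.volumeIoiPow (Module.finrank ℝ (E n) - 1) := by
    intro g
    calc ∫ x, h ‖x‖ * g (‖x‖⁻¹ • x)
        = ∫ x : ({(0)}ᶜ : Set (E n)), h ‖x.1‖ * g (‖x.1‖⁻¹ • x.1)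
            ∂((volume : Measure (E n)).comap (↑)) := by
          rw [integral_subtype_comap (measurableSet_singleton _).compl
            fun x : E n ↦ h ‖x‖ * g (‖x‖⁻¹ • x), restrict_compl_singleton]
      _ = ∫ p, g p.1 * h p.2 ∂(volume : Measure (E n)).toSphere.prod
            (.volumeIoiPow (Module.finrank ℝ (E n) - 1)) := by
          rw [← (Measure.measurePreserving_homeomorphUnitSphereProd
            (volume : Measure (E n))).integral_comp (Homeomorph.measurableEmbedding _)]
          simp [mul_comm]
      _ = _ := integral_prod_mul (fun θ : sphere (0 : E n) 1 ↦ g θ)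
            (fun r : Set.Ioi (0 : ℝ) ↦ h r)
  have key1 := key 1
  simp only [Pi.one_apply, mul_one, integral_const, smul_eq_mul] at key1
  have hS : (volume : Measure (E n)).toSphere.real Set.univ ≠ 0 := by
    rw [measureReal_ne_zero_iff]
    simp only [ne_eq, Measure.measure_univ_eq_zero]; exact Measure.toSphere_ne_zero _
  rw [key g, key1, integral_sphMeasure]
  field_simp

lemma gaussian_integral_norm_mul_direction (hn : n ≠ 0) (h : ℝ → ℝ) (g : E n → ℝ) :
    ∫ x, h ‖x‖ * g (‖x‖⁻¹ • x) ∂stdGaussian (E n) =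
      (∫ x, h ‖x‖ ∂stdGaussian (E n)) * ∫ θ, g θ ∂sphMeasure n := by
  obtain ⟨c, hc, hd⟩ := stdGaussian_eq_withDensity n
  have key : ∀ u : E n → ℝ, ∫ x, u x ∂stdGaussian (E n) =
      ∫ x, c * Real.exp (-‖x‖ ^ 2 / 2) * u x := by
    intro u
    rw [hd, integral_withDensity_eq_integral_toReal_smul (by fun_prop) (by simp)]
    congr 1 with x
    rw [ENNReal.toReal_ofReal (by positivity), smul_eq_mul]
  rw [key, key]
  have := integral_norm_mul_direction hn (fun r ↦ c * Real.exp (-r ^ 2 / 2) * h r) g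
  simpa only [mul_assoc] using this

lemma gaussian_integral_inner_sq (v : E n) :
    ∫ y, ⟪v, y⟫ ^ 2 ∂stdGaussian (E n) = ‖v‖ ^ 2 := by
  have h := variance_dual_stdGaussian (innerSL ℝ v)
  rw [variance_eq_integral (by fun_prop), integral_strongDual_stdGaussian] at h
  simpa using h

lemma gaussian_integral_norm_sq (n : ℕ) :
    ∫ x, ‖x‖ ^ 2 ∂stdGaussian (E n) = n := by
  have h : ∀ x : E n, ‖x‖ ^ 2 = ∑ i, ⟪EuclideanSpace.single i (1 : ℝ), x⟫ ^ 2 := by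
    intro x
    simp [EuclideanSpace.norm_sq_eq, EuclideanSpace.inner_single_left]
  simp_rw [h]
  rw [integral_finsetSum]
  · simp [gaussian_integral_inner_sq]
  · intro i _
    exact ((IsGaussian.memLp_two_id (μ := stdGaussian (E n))).const_inner
      (EuclideanSpace.single i (1 : ℝ))).integrable_sq


lemma sq_intervalIntegral_le {u : ℝ → ℝ} (hu : Continuous u) {b : ℝ} (hb : 0 < b) :
    (∫ t in (0 : ℝ)..b, u t) ^ 2 ≤ b * ∫ t in (0 : ℝ)..b, u t ^ 2 := by
  set I := ∫ t in (0 : ℝ)..b, u t with hI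
  have h0 : 0 ≤ ∫ t in (0 : ℝ)..b, (u t - I / b) ^ 2 :=
    intervalIntegral.integral_nonneg hb.le fun t _ ↦ sq_nonneg _
  have h1 : ∫ t in (0 : ℝ)..b, (u t - I / b) ^ 2 =
      (∫ t in (0 : ℝ)..b, u t ^ 2) - 2 * (I / b) * I + b * (I / b) ^ 2 := by
    have : ∀ t, (u t - I / b) ^ 2 = u t ^ 2 - 2 * (I / b) * u t + (I / b) ^ 2 := fun t ↦ by ring
    simp_rw [this]
    rw [intervalIntegral.integral_add
        ((by fun_prop : Continuous fun t ↦ u t ^ 2 - 2 * (I / b) * u t).intervalIntegrable _ _)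
        (by simp),
      intervalIntegral.integral_sub ((by fun_prop : Continuous fun t ↦ u t ^ 2).intervalIntegrable _ _)
        ((by fun_prop : Continuous fun t ↦ 2 * (I / b) * u t).intervalIntegrable _ _),
      intervalIntegral.integral_const_mul]
    simp [hI]
  rw [h1] at h0
  have h2 : b * ((∫ t in (0 : ℝ)..b, u t ^ 2) - 2 * (I / b) * I + b * (I / b) ^ 2) =
      b * (∫ t in (0 : ℝ)..b, u t ^ 2) - I ^ 2 := by
    field_simp; ring
  nlinarith [mul_nonneg hb.le h0]

lemma gaussian_ae_ne_zero (hn : 1 ≤ n) : ∀ᵐ x ∂stdGaussian (E n), x ≠ 0 := by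
  have : Nonempty (Fin n) := ⟨⟨0, hn⟩⟩
  exact (gaussian_absolutelyContinuous n).ae_le (Measure.ae_ne volume 0)

/-- Two independent Gaussian vectors in dimension at least two are almost surely linearly
independent, so that the arc joining them avoids the origin. -/
lemma gaussian_ae_arc_ne_zero (hn : 2 ≤ n) :
    ∀ᵐ p ∂(stdGaussian (E n)).prod (stdGaussian (E n)),
      ∀ t : ℝ, Real.cos t • p.1 + Real.sin t • p.2 ≠ 0 := by
  have hmeas : MeasurableSet {p : E n × E n | ‖p.1‖ ^ 2 * ‖p.2‖ ^ 2 - ⟪p.1, p.2⟫ ^ 2 ≠ 0} := by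
    refine (isOpen_ne_fun ?_ continuous_const).measurableSet
    fun_prop
  have key : ∀ᵐ p ∂(stdGaussian (E n)).prod (stdGaussian (E n)),
      ‖p.1‖ ^ 2 * ‖p.2‖ ^ 2 - ⟪p.1, p.2⟫ ^ 2 ≠ 0 := by
    rw [Measure.ae_prod_iff_ae_ae hmeas]
    filter_upwards [gaussian_ae_ne_zero (n := n) (by omega)] with x hx
    have hspan : ℝ ∙ x ≠ (⊤ : Submodule ℝ (E n)) := by
      intro h
      have h1 := finrank_span_singleton (K := ℝ) hx
      rw [h, finrank_top, finrank_euclideanSpace_fin] at h1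
      omega
    have h0 := gaussian_absolutelyContinuous n
      (Measure.addHaar_submodule (volume : Measure (E n)) _ hspan)
    have h1 : ∀ᵐ y ∂stdGaussian (E n), y ∉ ((ℝ ∙ x : Submodule ℝ (E n)) : Set (E n)) :=
      measure_eq_zero_iff_ae_notMem.1 h0
    filter_upwards [h1] with y hy hq
    apply hy
    have hz : ‖x‖ ^ 2 • y - ⟪x, y⟫ • x = 0 := by
      rw [← norm_eq_zero, ← sq_eq_zero_iff, norm_sub_sq_real, norm_smul, norm_smul,
        real_inner_smul_left, real_inner_smul_right, real_inner_comm x y, mul_pow, mul_pow,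
        Real.norm_eq_abs, Real.norm_eq_abs, sq_abs, sq_abs]
      linear_combination ‖x‖ ^ 2 * hq
    refine Submodule.mem_span_singleton.2 ⟨⟪x, y⟫ / ‖x‖ ^ 2, ?_⟩
    have hx2 : ‖x‖ ^ 2 ≠ 0 := by positivity
    rw [div_eq_inv_mul, mul_smul, ← sub_eq_zero.1 hz, inv_smul_smul₀ hx2]
  filter_upwards [key] with p hp t ht
  apply hp
  rcases eq_or_ne (Real.sin t) 0 with hs | hs
  · have hc : Real.cos t ≠ 0 := by
      intro hc
      have := Real.sin_sq_add_cos_sq t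
      simp [hs, hc] at this
    have : p.1 = 0 := by simpa [hs, hc] using ht
    simp [this]
  · have : p.2 = (-(Real.cos t / Real.sin t)) • p.1 := by
      have h := congrArg (fun z ↦ (Real.sin t)⁻¹ • z) ht
      simp only [smul_add, smul_zero, inv_smul_smul₀ hs] at h
      rw [eq_neg_of_add_eq_zero_right h, smul_smul, neg_smul, div_eq_inv_mul]
    rw [this, norm_smul, real_inner_smul_right, real_inner_self_eq_norm_sq, mul_pow,
      Real.norm_eq_abs, sq_abs]
    ring

/-- Gaussian Poincaré inequality with constant `π² / 8`, for functions that are differentiable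
away from the origin with bounded gradient. -/
lemma gaussian_poincare (hn : 2 ≤ n) {F : E n → ℝ} {V : E n → E n} {C : ℝ}
    (hF : ∀ x ≠ 0, HasFDerivAt F (innerSL ℝ (V x)) x) (hV : ContinuousOn V {0}ᶜ)
    (hC : ∀ x ≠ 0, ‖V x‖ ≤ C) (hF2 : MemLp F 2 (stdGaussian (E n)))
    (hmean : ∫ x, F x ∂stdGaussian (E n) = 0) :
    ∫ x, F x ^ 2 ∂stdGaussian (E n) ≤
      Real.pi ^ 2 / 8 * ∫ x, ‖V x‖ ^ 2 ∂stdGaussian (E n) := by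
  set γ := stdGaussian (E n) with hγ
  have hFm : Measurable F := measurable_of_continuousOn_compl_singleton 0
    fun x hx ↦ (hF x hx).continuousAt.continuousWithinAt
  have hVm : Measurable V := measurable_of_continuousOn_compl_singleton 0 hV
  have hV2 : Integrable (fun x ↦ ‖V x‖ ^ 2) γ := by
    refine Integrable.of_bound (C := C ^ 2) (by fun_prop) ?_
    filter_upwards [gaussian_ae_ne_zero (n := n) (by omega)] with x hx
    rw [norm_pow, norm_norm]
    exact pow_le_pow_left₀ (norm_nonneg _) (hC x hx) 2
  set H : E n × E n → ℝ≥0∞ := fun p ↦ ENNReal.ofReal (⟪V p.1, p.2⟫ ^ 2) with hH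
  have hHm : Measurable H := by fun_prop
  have hHint : ∫⁻ p, H p ∂γ.prod γ = ENNReal.ofReal (∫ x, ‖V x‖ ^ 2 ∂γ) := by
    rw [lintegral_prod _ hHm.aemeasurable,
      ofReal_integral_eq_lintegral_ofReal hV2 (Eventually.of_forall fun x ↦ sq_nonneg _)]
    refine lintegral_congr fun x ↦ ?_
    rw [← gaussian_integral_inner_sq,
      ofReal_integral_eq_lintegral_ofReal _ (Eventually.of_forall fun x ↦ sq_nonneg _)]
    exact (IsGaussian.memLp_two_id (μ := stdGaussian (E n))).const_inner (V x) |>.integrable_sq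
  have hHrot : ∀ t : ℝ, ∫⁻ p, H (ContinuousLinearMap.rotation t p) ∂γ.prod γ =
      ∫⁻ p, H p ∂γ.prod γ := by
    intro t
    have h := IsGaussian.map_rotation_eq_self (μ := γ) integral_id_stdGaussian t
    conv_rhs => rw [← h]
    rw [lintegral_map hHm (by fun_prop)]
  have hpath : ∀ᵐ p ∂γ.prod γ, ENNReal.ofReal ((F p.2 - F p.1) ^ 2) ≤
      ENNReal.ofReal (Real.pi / 2) *
        ∫⁻ t in Set.Ioc 0 (Real.pi / 2), H (ContinuousLinearMap.rotation t p) := by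
    filter_upwards [gaussian_ae_arc_ne_zero hn] with p hp
    set u : ℝ → ℝ := fun t ↦ ⟪V (Real.cos t • p.1 + Real.sin t • p.2),
      -Real.sin t • p.1 + Real.cos t • p.2⟫ with hu
    have hd : ∀ t, HasDerivAt (fun t ↦ F (Real.cos t • p.1 + Real.sin t • p.2)) (u t) t := by
      intro t
      have h1 : HasDerivAt (fun t ↦ Real.cos t • p.1 + Real.sin t • p.2)
          (-Real.sin t • p.1 + Real.cos t • p.2) t :=
        ((Real.hasDerivAt_cos t).smul_const p.1).add ((Real.hasDerivAt_sin t).smul_const p.2)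
      exact (hF _ (hp t)).comp_hasDerivAt t h1
    have huc : Continuous u := by
      refine Continuous.inner ?_ (by fun_prop)
      exact hV.comp_continuous (by fun_prop) hp
    have hftc := intervalIntegral.integral_eq_sub_of_hasDerivAt (a := 0) (b := Real.pi / 2)
      (fun t _ ↦ hd t) (huc.intervalIntegrable _ _)
    simp only [Real.cos_pi_div_two, Real.sin_pi_div_two, Real.cos_zero, Real.sin_zero, zero_smul,
      one_smul, zero_add, add_zero] at hftc
    have hle := sq_intervalIntegral_le huc Real.pi_div_two_pos
    rw [hftc] at hle
    refine (ENNReal.ofReal_le_ofReal hle).trans ?_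
    rw [ENNReal.ofReal_mul (by positivity), intervalIntegral.integral_of_le (by positivity),
      ofReal_integral_eq_lintegral_ofReal _ (Eventually.of_forall fun x ↦ sq_nonneg _)]
    · rfl
    · exact (huc.pow 2).integrableOn_Ioc
  have hswap : ∫⁻ p, (∫⁻ t in Set.Ioc 0 (Real.pi / 2), H (ContinuousLinearMap.rotation t p))
      ∂γ.prod γ = ENNReal.ofReal (Real.pi / 2) * ENNReal.ofReal (∫ x, ‖V x‖ ^ 2 ∂γ) := by
    rw [lintegral_lintegral_swap]
    · simp_rw [hHrot, hHint]
      simp [mul_comm]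
    · refine (hHm.comp ?_).aemeasurable
      refine Continuous.measurable ?_
      simp only [ContinuousLinearMap.rotation_apply]
      fun_prop
  have hFint : Integrable F γ := hF2.integrable (by norm_num)
  have h1 : Integrable (fun p : E n × E n ↦ F p.2 ^ 2) (γ.prod γ) := hF2.integrable_sq.comp_snd γ
  have h2 : Integrable (fun p : E n × E n ↦ F p.1 ^ 2) (γ.prod γ) := hF2.integrable_sq.comp_fst γ
  have h3 : Integrable (fun p : E n × E n ↦ F p.1 * F p.2) (γ.prod γ) := hFint.mul_prod hFint
  have hexp : ∀ p : E n × E n, (F p.2 - F p.1) ^ 2 =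
      F p.2 ^ 2 + F p.1 ^ 2 - 2 * (F p.1 * F p.2) := fun p ↦ by ring
  have hlhs : ∫ p, (F p.2 - F p.1) ^ 2 ∂γ.prod γ = 2 * ∫ x, F x ^ 2 ∂γ := by
    simp_rw [hexp]
    rw [integral_sub (f := fun p : E n × E n ↦ F p.2 ^ 2 + F p.1 ^ 2) (h1.add h2)
      (h3.const_mul 2), integral_add h1 h2, integral_const_mul,
      integral_prod_mul F F, hmean, integral_fun_snd (fun x ↦ F x ^ 2),
      integral_fun_fst (fun x ↦ F x ^ 2)]
    simp; ring
  have hint : Integrable (fun p : E n × E n ↦ (F p.2 - F p.1) ^ 2) (γ.prod γ) := by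
    simp_rw [hexp]
    exact (h1.add h2).sub (h3.const_mul 2)
  have hfinal : ENNReal.ofReal (2 * ∫ x, F x ^ 2 ∂γ) ≤
      ENNReal.ofReal (Real.pi / 2 * (Real.pi / 2 * ∫ x, ‖V x‖ ^ 2 ∂γ)) := by
    rw [← hlhs, ofReal_integral_eq_lintegral_ofReal hint (Eventually.of_forall fun x ↦ sq_nonneg _)]
    refine (lintegral_mono_ae hpath).trans_eq ?_
    rw [lintegral_const_mul' _ _ ENNReal.ofReal_ne_top, hswap, ENNReal.ofReal_mul (by positivity),
      ENNReal.ofReal_mul (by positivity)]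
  have h0 : 0 ≤ ∫ x, ‖V x‖ ^ 2 ∂γ := integral_nonneg fun x ↦ sq_nonneg _
  rw [ENNReal.ofReal_le_ofReal_iff (by positivity)] at hfinal
  linarith

/-- Poincaré inequality on the sphere, obtained by applying the Gaussian one to the
`1`-homogeneous extension `x ↦ ‖x‖ g(x / ‖x‖)`. -/
lemma sphere_poincare (hn : 2 ≤ n) {g : E n → ℝ} {G : E n → E n}
    (hg : ∀ θ ∈ sphere (0 : E n) 1, HasFDerivAt g (innerSL ℝ (G θ)) θ)
    (hG : ContinuousOn G (sphere 0 1)) (hmean : ∫ θ, g θ ∂sphMeasure n = 0) :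
    ∫ θ, g θ ^ 2 ∂sphMeasure n ≤
      11 / 5 / ((n : ℝ) - 1) * ∫ θ, ‖G θ‖ ^ 2 ∂sphMeasure n := by
  have hn0 : n ≠ 0 := by omega
  have hgc : ContinuousOn g (sphere 0 1) :=
    fun θ hθ ↦ (hg θ hθ).continuousAt.continuousWithinAt
  have hN : ∀ x : E n, x ≠ 0 → ‖x‖⁻¹ • x ∈ sphere (0 : E n) 1 := by
    intro x hx
    simp [norm_smul, hx]
  have hNc : ContinuousOn (fun x : E n ↦ ‖x‖⁻¹ • x) {0}ᶜ := by
    refine ContinuousOn.smul (ContinuousOn.inv₀ continuous_norm.continuousOn fun x hx ↦ ?_) continuousOn_id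
    simpa using hx
  set W : E n → E n := fun θ ↦ g θ • θ + (G θ - ⟪G θ, θ⟫ • θ) with hW
  have hWc : ContinuousOn W (sphere 0 1) := by fun_prop
  have hWn : ∀ θ ∈ sphere (0 : E n) 1, ‖W θ‖ ^ 2 ≤ g θ ^ 2 + ‖G θ‖ ^ 2 := by
    intro θ hθ
    have h1 : ⟪θ, θ⟫ = (1 : ℝ) := by
      rw [real_inner_self_eq_norm_sq, mem_sphere_zero_iff_norm.1 hθ]; norm_num
    have : ‖W θ‖ ^ 2 = g θ ^ 2 + ‖G θ‖ ^ 2 - ⟪G θ, θ⟫ ^ 2 := by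
      rw [← real_inner_self_eq_norm_sq, ← real_inner_self_eq_norm_sq]
      simp only [hW, inner_add_left, inner_add_right, inner_sub_left, inner_sub_right,
        real_inner_smul_left, real_inner_smul_right, h1, real_inner_comm (G θ) θ]
      ring
    nlinarith [sq_nonneg ⟪G θ, θ⟫]
  set F : E n → ℝ := fun x ↦ ‖x‖ * g (‖x‖⁻¹ • x) with hF
  have hFd : ∀ x ≠ 0, HasFDerivAt F (innerSL ℝ (W (‖x‖⁻¹ • x))) x := by
    intro x hx
    have hr : ‖x‖ ≠ 0 := norm_ne_zero_iff.2 hx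
    have h1 : HasFDerivAt (fun y : E n ↦ ‖y‖) (‖x‖⁻¹ • innerSL ℝ x) x := by
      have h := (hasStrictFDerivAt_norm_sq x).hasFDerivAt.sqrt (by positivity)
      simp only [Real.sqrt_sq (norm_nonneg _)] at h
      refine h.congr_fderiv ?_
      ext v
      simp
      field_simp
    have h2 := (hasDerivAt_inv hr).comp_hasFDerivAt x h1
    have h3 : HasFDerivAt (fun y : E n ↦ ‖y‖⁻¹ • y) _ x := h2.smul (hasFDerivAt_id x)
    have h4 := h1.mul (HasFDerivAt.comp (f := fun y : E n ↦ ‖y‖⁻¹ • y) x (hg _ (hN x hx)) h3)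
    refine h4.congr_fderiv ?_
    ext v
    simp [hW, real_inner_smul_right]
    field_simp
    ring
  have hFm : Measurable F := measurable_of_continuousOn_compl_singleton 0
    fun x hx ↦ (hFd x hx).continuousAt.continuousWithinAt
  obtain ⟨C, hC⟩ := (isCompact_sphere (0 : E n) 1).exists_bound_of_continuousOn hgc
  obtain ⟨D, hD⟩ := (isCompact_sphere (0 : E n) 1).exists_bound_of_continuousOn hWc
  have hF2 : MemLp F 2 (stdGaussian (E n)) := by
    refine (IsGaussian.memLp_two_id (μ := stdGaussian (E n))).of_le_mul (c := C)
      hFm.aestronglyMeasurable (Eventually.of_forall fun x ↦ ?_)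
    rcases eq_or_ne x 0 with rfl | hx
    · simp [hF]
    · rw [hF, norm_mul, norm_norm, mul_comm, id]
      exact mul_le_mul_of_nonneg_right (hC _ (hN x hx)) (norm_nonneg _)
  have hFmean : ∫ x, F x ∂stdGaussian (E n) = 0 := by
    rw [gaussian_integral_norm_mul_direction hn0 (fun r ↦ r) g, hmean, mul_zero]
  have key := gaussian_poincare hn hFd
    (hWc.comp hNc fun x hx ↦ hN x hx) (fun x hx ↦ hD _ (hN x hx)) hF2 hFmean
  have hl : ∫ x, F x ^ 2 ∂stdGaussian (E n) = n * ∫ θ, g θ ^ 2 ∂sphMeasure n := by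
    simp_rw [hF, mul_pow]
    rw [gaussian_integral_norm_mul_direction hn0 (fun r ↦ r ^ 2) (fun θ ↦ g θ ^ 2),
      gaussian_integral_norm_sq]
  have hr : ∫ x, ‖W (‖x‖⁻¹ • x)‖ ^ 2 ∂stdGaussian (E n) = ∫ θ, ‖W θ‖ ^ 2 ∂sphMeasure n := by
    simpa using gaussian_integral_norm_mul_direction hn0 (fun _ ↦ 1) (fun θ ↦ ‖W θ‖ ^ 2)
  have hmono : ∫ θ, ‖W θ‖ ^ 2 ∂sphMeasure n ≤
      ∫ θ, g θ ^ 2 ∂sphMeasure n + ∫ θ, ‖G θ‖ ^ 2 ∂sphMeasure n := by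
    have hg2 : Integrable (fun θ ↦ g θ ^ 2) (sphMeasure n) := integrable_sphMeasure hn0 (hgc.pow 2)
    have hG2 : Integrable (fun θ ↦ ‖G θ‖ ^ 2) (sphMeasure n) :=
      integrable_sphMeasure hn0 (hG.norm.pow 2)
    rw [← integral_add hg2 hG2]
    refine integral_mono_ae (integrable_sphMeasure hn0 (hWc.norm.pow 2)) (hg2.add hG2) ?_
    filter_upwards [ae_sphMeasure n] with θ hθ using hWn θ hθ
  rw [hl, hr] at key
  have hpi : Real.pi ^ 2 / 8 ≤ 5 / 4 := by
    nlinarith [Real.pi_lt_d2, Real.pi_pos]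
  set A := ∫ θ, g θ ^ 2 ∂sphMeasure n
  set B := ∫ θ, ‖G θ‖ ^ 2 ∂sphMeasure n
  have hA : 0 ≤ A := integral_nonneg fun θ ↦ sq_nonneg _
  have hB : 0 ≤ B := integral_nonneg fun θ ↦ sq_nonneg _
  have hW0 : 0 ≤ ∫ θ, ‖W θ‖ ^ 2 ∂sphMeasure n := integral_nonneg fun θ ↦ sq_nonneg _
  have hmain : n * A ≤ 5 / 4 * (A + B) :=
    key.trans (mul_le_mul hpi hmono hW0 (by norm_num))
  have hn2 : (2 : ℝ) ≤ n := by exact_mod_cast hn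
  rw [div_mul_eq_mul_div, le_div_iff₀ (by linarith)]
  nlinarith [mul_nonneg hA (sub_nonneg.2 hn2)]

lemma sum_norm_adjoint_sq (A : E n →L[ℝ] E n) :
    ∑ i, ‖A.adjoint (EuclideanSpace.single i 1)‖ ^ 2 = hsNormSq A := by
  simp_rw [hsNormSq, EuclideanSpace.norm_sq_eq]
  rw [Finset.sum_comm]
  refine Finset.sum_congr rfl fun j _ ↦ Finset.sum_congr rfl fun i _ ↦ ?_
  have h := A.adjoint_inner_left (EuclideanSpace.single j 1) (EuclideanSpace.single i 1)
  simp only [EuclideanSpace.inner_single_left, EuclideanSpace.inner_single_right] at h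
  simp only [map_one, one_mul] at h
  rw [← h]
  simp

/-- **Corollary 6.2 (Statement 17).** Second order Poincaré-type inequality in the
Euclidean setup. -/
theorem second_order_poincare_euclidean
    {n : ℕ} (hn : 2 ≤ n) (f : E n → ℝ) (U : Set (E n)) (hU : IsOpen U)
    (hUS : Metric.sphere (0 : E n) 1 ⊆ U) (hf : ContDiffOn ℝ 2 f U)
    (hmean : ∫ θ, f θ ∂sphMeasure n = 0)
    (hlin : ∀ v : E n, ∫ θ, ⟪v, θ⟫ * f θ ∂sphMeasure n = 0) :
    ∀ a : ℝ,
      ∫ θ, (f θ) ^ 2 ∂sphMeasure n ≤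
        (5 / ((n : ℝ) - 1) ^ 2) *
          ∫ θ, hsNormSq (hess f θ - a • ContinuousLinearMap.id ℝ (E n)) ∂sphMeasure n := by
  have hn0 : n ≠ 0 := by omega
  intro a
  have := isProbabilityMeasure_sphMeasure hn0
  have hfd : ContDiffOn ℝ 1 (fderiv ℝ f) U := hf.fderiv_of_isOpen hU (by norm_num)
  have hgrad : ContDiffOn ℝ 1 (gradient f) U :=
    (InnerProductSpace.toDual ℝ (E n)).symm.contDiff.comp_contDiffOn hfd
  have hderiv : ∀ x ∈ U, HasFDerivAt f (innerSL ℝ (gradient f x)) x := fun x hx ↦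
    ((hf.differentiableOn (by norm_num)).differentiableAt
      (hU.mem_nhds hx)).hasGradientAt.hasFDerivAt
  have hhess : ∀ x ∈ U, HasFDerivAt (gradient f) (hess f x) x := fun x hx ↦
    ((hgrad.differentiableOn (by norm_num)).differentiableAt (hU.mem_nhds hx)).hasFDerivAt
  have hfc : ContinuousOn f (sphere 0 1) := hf.continuousOn.mono hUS
  have hgc : ContinuousOn (gradient f) (sphere 0 1) := hgrad.continuousOn.mono hUS
  have hhc : ContinuousOn (hess f) (sphere 0 1) :=
    (hgrad.continuousOn_fderiv_of_isOpen hU le_rfl).mono hUS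
  set A : E n → E n →L[ℝ] E n := fun x ↦ hess f x - a • ContinuousLinearMap.id ℝ (E n) with hA
  have hAc : ContinuousOn A (sphere 0 1) := hhc.sub continuousOn_const
  set c : E n := ∫ x, (gradient f x - a • x) ∂sphMeasure n with hc
  set G : E n → E n := fun x ↦ gradient f x - a • x - c with hG
  have hGc : ContinuousOn G (sphere 0 1) := by fun_prop
  set q : E n → ℝ := fun x ↦ ⟪c, x⟫ - ∫ y, ⟪c, y⟫ ∂sphMeasure n with hq
  have hqc : Continuous q := by fun_prop
  set g : E n → ℝ := fun x ↦ f x - q x - a / 2 * (‖x‖ ^ 2 - 1) with hg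
  have hgd : ∀ θ ∈ sphere (0 : E n) 1, HasFDerivAt g (innerSL ℝ (G θ)) θ := by
    intro θ hθ
    have h1 : HasFDerivAt q (innerSL ℝ c) θ := (innerSL ℝ c).hasFDerivAt.sub_const _
    have h2 := ((hasStrictFDerivAt_norm_sq θ).hasFDerivAt.sub_const 1).const_mul (a / 2)
    refine (((hderiv θ (hUS hθ)).sub h1).sub h2).congr_fderiv ?_
    ext v
    simp [hG]
    ring
  have hgf : ∀ᵐ θ ∂sphMeasure n, g θ = f θ - q θ := by
    filter_upwards [ae_sphMeasure n] with θ hθ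
    simp [hg, mem_sphere_zero_iff_norm.1 hθ]
  have hfi := integrable_sphMeasure hn0 hfc
  have hqi := integrable_sphMeasure hn0 hqc.continuousOn
  have hci : Integrable (fun y ↦ ⟪c, y⟫) (sphMeasure n) :=
    integrable_sphMeasure hn0 (by fun_prop)
  have hgmean : ∫ θ, g θ ∂sphMeasure n = 0 := by
    rw [integral_congr_ae hgf, integral_sub hfi hqi, hmean, hq,
      integral_sub hci (integrable_const _)]
    simp
  have hfq : ∫ θ, f θ * q θ ∂sphMeasure n = 0 := by
    have h : ∀ θ, f θ * q θ = ⟪c, θ⟫ * f θ - (∫ y, ⟪c, y⟫ ∂sphMeasure n) * f θ := fun θ ↦ by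
      rw [hq]; ring
    simp_rw [h]
    rw [integral_sub (integrable_sphMeasure hn0 (by fun_prop)) (hfi.const_mul _),
      integral_const_mul, hmean, hlin, mul_zero, sub_zero]
  have hfg : ∫ θ, f θ ^ 2 ∂sphMeasure n ≤ ∫ θ, g θ ^ 2 ∂sphMeasure n := by
    have h : ∀ᵐ θ ∂sphMeasure n, g θ ^ 2 = f θ ^ 2 + q θ ^ 2 - 2 * (f θ * q θ) := by
      filter_upwards [hgf] with θ hθ
      rw [hθ]; ring
    have hf2 : Integrable (fun θ ↦ f θ ^ 2) (sphMeasure n) := integrable_sphMeasure hn0 (hfc.pow 2)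
    have hq2 : Integrable (fun θ ↦ q θ ^ 2) (sphMeasure n) :=
      integrable_sphMeasure hn0 (hqc.pow 2).continuousOn
    have hfq1 : Integrable (fun θ ↦ f θ * q θ) (sphMeasure n) :=
      integrable_sphMeasure hn0 (hfc.mul hqc.continuousOn)
    rw [integral_congr_ae h, integral_sub (f := fun θ ↦ f θ ^ 2 + q θ ^ 2) (hf2.add hq2)
      (hfq1.const_mul 2), integral_add hf2 hq2, integral_const_mul, hfq]
    have : 0 ≤ ∫ θ, q θ ^ 2 ∂sphMeasure n := integral_nonneg fun θ ↦ sq_nonneg _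
    linarith
  have hfirst := sphere_poincare hn hgd hGc hgmean
  have hcoord : ∀ i : Fin n, ∫ θ, (G θ i) ^ 2 ∂sphMeasure n ≤ 11 / 5 / ((n : ℝ) - 1) *
      ∫ θ, ‖(A θ).adjoint (EuclideanSpace.single i 1)‖ ^ 2 ∂sphMeasure n := by
    intro i
    refine sphere_poincare hn (g := fun θ ↦ G θ i)
      (G := fun θ ↦ (A θ).adjoint (EuclideanSpace.single i 1)) ?_ ?_ ?_
    · intro θ hθ
      have h1 : HasFDerivAt G (A θ) θ :=
        ((hhess θ (hUS hθ)).sub ((hasFDerivAt_id θ).const_smul a)).sub_const c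
      refine ((EuclideanSpace.proj (𝕜 := ℝ) i).hasFDerivAt.comp θ h1).congr_fderiv ?_
      ext v
      simp [ContinuousLinearMap.adjoint_inner_left, EuclideanSpace.inner_single_left]
    · exact (ContinuousLinearMap.adjoint.continuous.comp_continuousOn hAc).clm_apply
        continuousOn_const
    · have h0 : Integrable (fun x ↦ gradient f x - a • x) (sphMeasure n) :=
        integrable_sphMeasure hn0 (by fun_prop)
      have h1 : ∫ x, G x ∂sphMeasure n = 0 := by
        rw [hG, integral_sub h0 (integrable_const c)]
        simp [hc]
      have h2 := (EuclideanSpace.proj (𝕜 := ℝ) i).integral_comp_comm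
        (h0.sub (integrable_const c))
      exact h2.trans ((congrArg _ h1).trans (map_zero _))
  have hsecond : ∫ θ, ‖G θ‖ ^ 2 ∂sphMeasure n ≤ 11 / 5 / ((n : ℝ) - 1) *
      ∫ θ, hsNormSq (A θ) ∂sphMeasure n := by
    simp_rw [EuclideanSpace.real_norm_sq_eq, ← sum_norm_adjoint_sq]
    rw [integral_finsetSum, integral_finsetSum, Finset.mul_sum]
    · exact Finset.sum_le_sum fun i _ ↦ hcoord i
    · intro i _
      exact integrable_sphMeasure hn0
        (((ContinuousLinearMap.adjoint.continuous.comp_continuousOn hAc).clm_apply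
          continuousOn_const).norm.pow 2)
    · intro i _
      exact integrable_sphMeasure hn0
        (((EuclideanSpace.proj (𝕜 := ℝ) i).continuous.comp_continuousOn hGc).pow 2)
  have hn2 : (2 : ℝ) ≤ n := by exact_mod_cast hn
  have hK : 0 ≤ 11 / 5 / ((n : ℝ) - 1) := div_nonneg (by norm_num) (by linarith)
  have hS : 0 ≤ ∫ θ, hsNormSq (A θ) ∂sphMeasure n :=
    integral_nonneg fun θ ↦ Finset.sum_nonneg fun i _ ↦ sq_nonneg _
  calc ∫ θ, f θ ^ 2 ∂sphMeasure n
      ≤ 11 / 5 / ((n : ℝ) - 1) * (11 / 5 / ((n : ℝ) - 1) *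
          ∫ θ, hsNormSq (A θ) ∂sphMeasure n) :=
        hfg.trans (hfirst.trans (mul_le_mul_of_nonneg_left hsecond hK))
    _ = (121 / 25) / ((n : ℝ) - 1) ^ 2 * ∫ θ, hsNormSq (A θ) ∂sphMeasure n := by
        rw [← mul_assoc, div_mul_div_comm]; ring
    _ ≤ 5 / ((n : ℝ) - 1) ^ 2 * ∫ θ, hsNormSq (A θ) ∂sphMeasure n := by
        gcongr
        norm_num

end SecondOrderConc
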